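/- For every nonnegative integer n, b'₅(100n+11) ≡ 0 (mod 4). -/

import Mathlib

/-- `b5' n` is the number of partitions of `n` into distinct parts,
none of which is divisible by `5` (with `b5' 0 = 1`). -/
def b5' (n : ℕ) : ℕ :=
  ((Nat.Partition.distincts n).filter (fun p => ∀ i ∈ p.parts, ¬ (5 ∣ i))).card

/-!
Let `F = ∏ (1 + qⁿ)` over the `n` prime to `5`, `W = ∏ (1 + qⁿ)` over all `n ≥ 1`, and
`φ = ∑ (-1)ᵏ q ^ k²` over all integers `k`. Up to a factor that is a series in `q²`, `F` equals the
product `f(q, q⁹) f(q³, q⁷)` of two theta series, and this product coincides with the series of its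
own odd-indexed coefficients. Hence `G(q) φ(q) = φ(q²) W(q¹⁰)`, where `G` collects the odd-indexed
coefficients of `F`. The Jacobi triple product behind these theta series is the limit of MacMahon's
finite identity.

Writing `φ = 1 + 2 S` and working modulo `4`, the dissection becomes
`G = (1 + 2 S(q²)) W(q¹⁰) - 2 S(q) W(q¹⁰)`. At `q ^ (50 n + 5)` the first summand, a series in `q²`,
vanishes, and a term of the second one comes from `x² + 10 w = 50 n + 5`, which forces `5 ∣ x` and
`w ≡ 3 [MOD 5]`. For such `w` the coefficient of `W` is even, since modulo `2` it is the coefficient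
of `∏ (1 - qⁿ)` and no pentagonal number is `3` modulo `5`.
-/

open PowerSeries Finset Filter Topology

section GaussBinom

variable {A : Type*} [CommSemiring A]

/-- The Gaussian binomial coefficient `[n, k]_p`, defined by the `p`-analogue of Pascal's rule. -/
def gaussBinom (p : A) : ℕ → ℕ → A
  | _, 0 => 1
  | 0, _ + 1 => 0
  | n + 1, k + 1 => gaussBinom p n k + p ^ (k + 1) * gaussBinom p n (k + 1)

@[simp]
lemma gaussBinom_zero_right (p : A) (n : ℕ) : gaussBinom p n 0 = 1 := by cases n <;> rfl

lemma gaussBinom_succ_succ (p : A) (n k : ℕ) :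
    gaussBinom p (n + 1) (k + 1) = gaussBinom p n k + p ^ (k + 1) * gaussBinom p n (k + 1) := rfl

lemma gaussBinom_eq_zero_of_lt (p : A) {n k : ℕ} (h : n < k) : gaussBinom p n k = 0 := by
  induction n generalizing k with
  | zero => obtain ⟨k, rfl⟩ := Nat.exists_eq_succ_of_ne_zero h.ne'; rfl
  | succ n ih =>
    obtain ⟨k, rfl⟩ := Nat.exists_eq_succ_of_ne_zero (Nat.ne_zero_of_lt h)
    rw [gaussBinom_succ_succ, ih (by omega), ih (by omega), mul_zero, add_zero]

@[simp]
lemma gaussBinom_self (p : A) (n : ℕ) : gaussBinom p n n = 1 := by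
  induction n with
  | zero => rfl
  | succ n ih =>
    rw [gaussBinom_succ_succ, ih, gaussBinom_eq_zero_of_lt p n.lt_succ_self, mul_zero, add_zero]

theorem prod_one_add_mul_pow_eq_sum_gaussBinom (p z : A) (n : ℕ) :
    ∏ i ∈ range n, (1 + z * p ^ i) =
      ∑ k ∈ range (n + 1), gaussBinom p n k * p ^ k.choose 2 * z ^ k := by
  induction n generalizing z with
  | zero => simp
  | succ n ih =>
    have hshift (i : ℕ) : 1 + z * p ^ (i + 1) = 1 + z * p * p ^ i := by ring
    have hterm (k : ℕ) : gaussBinom p (n + 1) (k + 1) * p ^ (k + 1).choose 2 * z ^ (k + 1) =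
        gaussBinom p n k * p ^ k.choose 2 * (z * p) ^ k * z +
          gaussBinom p n (k + 1) * p ^ (k + 1).choose 2 * (z * p) ^ (k + 1) := by
      rw [gaussBinom_succ_succ, Nat.choose_succ_succ' k 1, Nat.choose_one_right]
      ring
    have hlast : ∑ k ∈ range (n + 1),
          gaussBinom p n (k + 1) * p ^ (k + 1).choose 2 * (z * p) ^ (k + 1) + 1 =
        ∑ k ∈ range (n + 1), gaussBinom p n k * p ^ k.choose 2 * (z * p) ^ k := by
      rw [sum_range_succ, sum_range_succ' _ n, gaussBinom_eq_zero_of_lt p n.lt_succ_self]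
      simp
    rw [prod_range_succ', sum_range_succ' _ (n + 1)]
    simp only [hshift, hterm, ih, sum_add_distrib, ← sum_mul]
    simp only [gaussBinom_zero_right, Nat.choose_zero_succ, pow_zero, mul_one]
    rw [add_assoc, hlast]
    ring

end GaussBinom

section QPochhammer

variable {A : Type*} [CommRing A]

/-- The finite `q`-Pochhammer symbol `(p; p)_n = (1 - p)(1 - p²) ⋯ (1 - pⁿ)`. -/
def qPochhammer (p : A) (n : ℕ) : A := ∏ i ∈ range n, (1 - p ^ (i + 1))

lemma qPochhammer_succ (p : A) (n : ℕ) :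
    qPochhammer p (n + 1) = qPochhammer p n * (1 - p ^ (n + 1)) :=
  prod_range_succ _ _

theorem gaussBinom_mul_qPochhammer (p : A) (i j : ℕ) :
    gaussBinom p (i + j) i * (qPochhammer p i * qPochhammer p j) = qPochhammer p (i + j) := by
  induction hn : i + j generalizing i j with
  | zero =>
    obtain ⟨rfl, rfl⟩ : i = 0 ∧ j = 0 := by omega
    simp [qPochhammer]
  | succ n ih =>
    rcases i with _ | i
    · simp [qPochhammer, ← hn]
    rcases j with _ | j
    · obtain rfl : i = n := by omega
      simp [qPochhammer]
    have hp : p ^ (n + 1) = p ^ (i + 1) * p ^ (j + 1) := by rw [← hn, pow_add]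
    have hi := ih i (j + 1) (by omega)
    have hj := ih (i + 1) j (by omega)
    rw [qPochhammer_succ p j] at hi
    rw [qPochhammer_succ p i] at hj
    rw [gaussBinom_succ_succ, qPochhammer_succ p i, qPochhammer_succ p j, qPochhammer_succ p n]
    linear_combination (1 - p ^ (i + 1)) * hi + p ^ (i + 1) * (1 - p ^ (j + 1)) * hj
      + qPochhammer p n * hp

lemma pow_dvd_qPochhammer_sub (p : A) {m n : ℕ} (h : m ≤ n) :
    p ^ m ∣ qPochhammer p n - qPochhammer p m := by
  induction n, h using Nat.le_induction with
  | base => simp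
  | succ n h ih =>
    rw [qPochhammer_succ, mul_sub, mul_one, sub_right_comm]
    exact dvd_sub ih ((pow_dvd_pow p (by omega)).mul_left _)

/-- Both factorials in the denominator of `[i + j, i]_p` agree with `(p; p)_n` modulo
`p ^ min i j`, which is why a single one of them already inverts it. -/
lemma pow_min_dvd_qPochhammer_mul_gaussBinom_mul_sub (p : A) {i j n : ℕ} (hn : min i j ≤ n) :
    p ^ min i j ∣ qPochhammer p (min i j) * (gaussBinom p (i + j) i * qPochhammer p n - 1) := by
  set M := min i j
  have hi := pow_dvd_qPochhammer_sub p (min_le_left i j)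
  have hj := pow_dvd_qPochhammer_sub p (min_le_right i j)
  have hij := pow_dvd_qPochhammer_sub p (show M ≤ i + j by omega)
  have hMn := pow_dvd_qPochhammer_sub p hn
  have key : qPochhammer p M * (gaussBinom p (i + j) i * qPochhammer p n - 1) =
      (qPochhammer p (i + j) - qPochhammer p M)
        + gaussBinom p (i + j) i * qPochhammer p M * (qPochhammer p n - qPochhammer p M)
        - gaussBinom p (i + j) i * qPochhammer p j * (qPochhammer p i - qPochhammer p M)
        - gaussBinom p (i + j) i * qPochhammer p M * (qPochhammer p j - qPochhammer p M) := by
    rw [← gaussBinom_mul_qPochhammer]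
    ring
  rw [key]
  exact dvd_sub (dvd_sub (dvd_add hij (hMn.mul_left _)) (hi.mul_left _)) (hj.mul_left _)

end QPochhammer

section Theta

/-- The triangular number `k (k + 1) / 2` of an integer `k`; it is nonnegative, so it is encoded
as a natural number in order to serve as an exponent. -/
def triangular (k : ℤ) : ℕ := (k * (k + 1) / 2).toNat

lemma two_mul_natCast_triangular (k : ℤ) : 2 * (triangular k : ℤ) = k * (k + 1) := by
  have hnonneg : 0 ≤ k * (k + 1) := by
    rcases le_or_gt 0 k with h | h
    · positivity
    · exact mul_nonneg_of_nonpos_of_nonpos h.le h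
  rw [triangular, Int.toNat_of_nonneg (by omega)]
  exact Int.two_mul_ediv_two_of_even (Int.even_mul_succ_self k)

lemma triangular_add_triangular_neg (k : ℤ) : triangular k + triangular (-k) = k.natAbs ^ 2 := by
  zify
  rw [sq_abs]
  linarith [two_mul_natCast_triangular k, two_mul_natCast_triangular (-k)]

lemma choose_two_eq_triangular_neg (n : ℕ) : n.choose 2 = triangular (-n) := by
  have h := two_mul_natCast_triangular (-n)
  have hchoose : (2 * n.choose 2 : ℤ) = n * (n - 1) := by
    cases n with
    | zero => simp
    | succ n =>
      have hn : 2 * (n + 1).choose 2 = (n + 1) * n := by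
        rw [Nat.choose_two_right, Nat.two_mul_div_two_of_even (Nat.even_mul_pred_self _),
          Nat.add_sub_cancel]
      push_cast
      rw [add_sub_cancel_right]
      exact_mod_cast hn
  zify
  linarith

variable {A : Type*} [CommSemiring A]

/-- The `k`-th term `a ^ (k (k + 1) / 2) * b ^ (k (k - 1) / 2)` of Ramanujan's theta series. -/
def thetaTerm (a b : A) (k : ℤ) : A := a ^ triangular k * b ^ triangular (-k)

lemma thetaTerm_add_one_mul (a b : A) (j n : ℕ) :
    thetaTerm a b (j + 1 - n) * (b * (a * b) ^ n) = (a * b) ^ (j + 1) * thetaTerm a b (j - n) := by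
  have ha : triangular (j + 1 - n) + n = j + 1 + triangular (j - n) := by
    zify
    linarith [two_mul_natCast_triangular (j + 1 - n), two_mul_natCast_triangular (j - n)]
  have hb : triangular (-(j + 1 - n)) + 1 + n = j + 1 + triangular (-(j - n)) := by
    zify
    linarith [two_mul_natCast_triangular (-(j + 1 - n)), two_mul_natCast_triangular (-(j - n))]
  calc thetaTerm a b (j + 1 - n) * (b * (a * b) ^ n)
    _ = a ^ (triangular (j + 1 - n) + n) * b ^ (triangular (-(j + 1 - n)) + 1 + n) := by
        rw [thetaTerm]; ring
    _ = _ := by rw [ha, hb, thetaTerm]; ring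

lemma thetaTerm_neg_sub_one (a b : A) (n : ℕ) :
    thetaTerm a b (-n - 1) = thetaTerm a b (-n) * (b * (a * b) ^ n) := by
  have ha : triangular (-n - 1) = triangular (-n) + n := by
    zify
    linarith [two_mul_natCast_triangular (-n - 1), two_mul_natCast_triangular (-n)]
  have hb : triangular (-(-n - 1)) = triangular (-(-n)) + 1 + n := by
    zify
    linarith [two_mul_natCast_triangular (-(-n - 1)), two_mul_natCast_triangular (-(-n))]
  rw [thetaTerm, ha, hb, thetaTerm]
  ring

/-- MacMahon's finite form of the Jacobi triple product. -/
theorem prod_mul_prod_eq_sum_gaussBinom_mul_thetaTerm (a b : A) (m n : ℕ) :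
    (∏ i ∈ range m, (1 + a * (a * b) ^ i)) * ∏ i ∈ range n, (1 + b * (a * b) ^ i) =
      ∑ j ∈ range (m + n + 1), gaussBinom (a * b) (m + n) j * thetaTerm a b (j - n) := by
  induction n with
  | zero =>
    rw [prod_range_zero, mul_one, add_zero, prod_one_add_mul_pow_eq_sum_gaussBinom]
    refine sum_congr rfl fun j _ ↦ ?_
    have : triangular j = j + triangular (-j) := by
      zify; linarith [two_mul_natCast_triangular j, two_mul_natCast_triangular (-j)]
    rw [choose_two_eq_triangular_neg, Nat.cast_zero, sub_zero, thetaTerm, this]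
    ring
  | succ n ih =>
    set p := a * b
    have hpascal (j : ℕ) :
        gaussBinom p (m + n + 1) (j + 1) * thetaTerm a b ((j + 1 : ℕ) - (n + 1 : ℕ)) =
          gaussBinom p (m + n) j * thetaTerm a b (j - n) +
            gaussBinom p (m + n) (j + 1) * thetaTerm a b ((j + 1 : ℕ) - n) * (b * p ^ n) := by
      rw [gaussBinom_succ_succ, mul_assoc _ _ (b * p ^ n)]
      push_cast
      rw [thetaTerm_add_one_mul, add_sub_add_right_eq_sub]
      ring
    have hfirst : thetaTerm a b ((0 : ℕ) - (n + 1 : ℕ)) =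
        thetaTerm a b ((0 : ℕ) - n) * (b * p ^ n) := by
      simpa [sub_eq_add_neg, add_comm] using thetaTerm_neg_sub_one a b n
    have hlast : ∑ j ∈ range (m + n + 1), gaussBinom p (m + n) (j + 1) *
          thetaTerm a b ((j + 1 : ℕ) - n) + thetaTerm a b ((0 : ℕ) - n) =
        ∑ j ∈ range (m + n + 1), gaussBinom p (m + n) j * thetaTerm a b (j - n) := by
      rw [sum_range_succ, sum_range_succ' _ (m + n),
        gaussBinom_eq_zero_of_lt p (m + n).lt_succ_self, gaussBinom_zero_right, zero_mul,
        add_zero, one_mul]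
    rw [prod_range_succ, ← mul_assoc, ih, mul_one_add, ← add_assoc, sum_range_succ' _ (m + n + 1)]
    simp only [hpascal, sum_add_distrib, ← sum_mul]
    rw [gaussBinom_zero_right, one_mul, hfirst, add_assoc (G := A), ← add_mul, hlast]

end Theta

section TripleProduct

variable {R : Type*} [CommRing R]

lemma X_pow_dvd_mul_pow {a : R⟦X⟧} (ha : X ∣ a) (b : R⟦X⟧) (i : ℕ) : X ^ i ∣ b * a ^ i :=
  (pow_dvd_pow_of_dvd ha i).mul_left b

lemma isUnit_qPochhammer {p : R⟦X⟧} (hp : X ∣ p) (n : ℕ) : IsUnit (qPochhammer p n) := by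
  rw [isUnit_iff_constantCoeff, qPochhammer, map_prod]
  simp [X_dvd_iff.mp hp]

lemma X_pow_natAbs_dvd_thetaTerm {a b : R⟦X⟧} (ha : X ∣ a) (hb : X ∣ b) (k : ℤ) :
    X ^ k.natAbs ∣ thetaTerm a b k := by
  calc X ^ k.natAbs
    _ ∣ X ^ (triangular k + triangular (-k)) := by
        rw [triangular_add_triangular_neg]
        exact pow_dvd_pow X (Nat.le_self_pow two_ne_zero _)
    _ ∣ thetaTerm a b k := by
        rw [pow_add]
        exact mul_dvd_mul (pow_dvd_pow_of_dvd ha _) (pow_dvd_pow_of_dvd hb _)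

lemma X_pow_min_dvd_gaussBinom_mul_qPochhammer_sub_one {p : R⟦X⟧} (hp : X ∣ p) {i j n : ℕ}
    (hn : min i j ≤ n) : X ^ min i j ∣ gaussBinom p (i + j) i * qPochhammer p n - 1 :=
  (pow_dvd_pow_of_dvd hp _).trans <| (isUnit_qPochhammer hp _).dvd_mul_left.mp <|
    pow_min_dvd_qPochhammer_mul_gaussBinom_mul_sub p hn

theorem X_pow_dvd_prod_sub_sum_thetaTerm {a b : R⟦X⟧} (ha : X ∣ a) (hb : X ∣ b) (m : ℕ) :
    X ^ m ∣ ∏ i ∈ range m, ((1 + a * (a * b) ^ i) * (1 + b * (a * b) ^ i) *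
        (1 - (a * b) ^ (i + 1))) - ∑ k ∈ Icc (-m : ℤ) m, thetaTerm a b k := by
  have hsum : ∑ k ∈ Icc (-m : ℤ) m, thetaTerm a b k =
      ∑ j ∈ range (m + m + 1), thetaTerm a b (j - m) :=
    (sum_nbij' (fun j : ℕ ↦ (j - m : ℤ)) (fun k ↦ (k + m).toNat)
      (by grind) (by grind) (by grind) (by grind) (by grind)).symm
  rw [prod_mul_distrib, prod_mul_distrib, prod_mul_prod_eq_sum_gaussBinom_mul_thetaTerm, hsum,
    ← qPochhammer, sum_mul, ← sum_sub_distrib]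
  refine dvd_sum fun j hj ↦ ?_
  obtain ⟨i, hi⟩ := Nat.exists_eq_add_of_le (Nat.le_of_lt_succ (mem_range.mp hj))
  have hm : m = min j i + (j - m : ℤ).natAbs := by omega
  rw [mul_right_comm, ← sub_one_mul]
  conv_lhs => rw [hm, pow_add]
  rw [hi]
  exact mul_dvd_mul
    (X_pow_min_dvd_gaussBinom_mul_qPochhammer_sub_one (ha.mul_right b) (by omega))
    (X_pow_natAbs_dvd_thetaTerm ha hb _)

end TripleProduct

section Convergence

open scoped PowerSeries.WithPiTopology

variable {R : Type*} [CommRing R] [TopologicalSpace R]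

lemma summable_of_X_pow_dvd {ι : Type*} {f : ι → R⟦X⟧} {e : ι → ℕ}
    (he : Tendsto e cofinite atTop) (hf : ∀ i, X ^ e i ∣ f i) : Summable f := by
  refine (WithPiTopology.summable_iff_summable_coeff R).mpr fun n ↦
    summable_of_hasFiniteSupport ?_
  refine (eventually_cofinite.mp (he.eventually_gt_atTop n)).subset fun i hi hlt ↦ ?_
  exact hi (X_pow_dvd_iff.mp (hf i) n hlt)

lemma multipliable_one_add_of_X_pow_dvd {f : ℕ → R⟦X⟧} (hf : ∀ i, X ^ i ∣ f i) :
    Multipliable fun i ↦ 1 + f i := by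
  refine WithPiTopology.multipliable_one_add_of_tendsto_order_atTop_nhds_top R ?_
  refine ENat.tendsto_nhds_top_iff_natCast_lt.mpr fun n ↦ ?_
  filter_upwards [eventually_gt_atTop n] with i hi
  exact (Nat.cast_lt.mpr hi).trans_le (nat_le_order _ _ (X_pow_dvd_iff.mp (hf i)))

lemma tendsto_zero_of_X_pow_dvd {f : ℕ → R⟦X⟧} (hf : ∀ i, X ^ i ∣ f i) :
    Tendsto f atTop (𝓝 0) := by
  refine (WithPiTopology.tendsto_iff_coeff_tendsto R _ _ _).mpr fun n ↦
    tendsto_const_nhds.congr' ?_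
  filter_upwards [eventually_gt_atTop n] with i hi
  rw [X_pow_dvd_iff.mp (hf i) n hi, map_zero]

lemma tendsto_natAbs_cofinite : Tendsto Int.natAbs cofinite atTop := by
  refine tendsto_atTop.mpr fun n ↦ eventually_cofinite.mpr ?_
  refine (Set.finite_Icc (-n : ℤ) n).subset fun k hk ↦ ?_
  rw [Set.mem_ofPred_eq, not_le] at hk
  rw [Set.mem_Icc]
  omega

/-- Ramanujan's theta series `f(a, b) = ∑ a ^ (k (k + 1) / 2) * b ^ (k (k - 1) / 2)`, summed over
all integers `k`, for power series `a` and `b`. -/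
noncomputable def ramanujanTheta (a b : R⟦X⟧) : R⟦X⟧ := ∑' k : ℤ, thetaTerm a b k

variable {a b : R⟦X⟧}

lemma summable_thetaTerm (ha : X ∣ a) (hb : X ∣ b) : Summable (thetaTerm a b) :=
  summable_of_X_pow_dvd tendsto_natAbs_cofinite (X_pow_natAbs_dvd_thetaTerm ha hb)

variable [IsTopologicalRing R] [T2Space R]

theorem jacobi_triple_product (ha : X ∣ a) (hb : X ∣ b) :
    (∏' i, (1 + a * (a * b) ^ i)) * (∏' i, (1 + b * (a * b) ^ i)) * ∏' i, (1 - (a * b) ^ (i + 1)) =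
      ramanujanTheta a b := by
  have hab : X ∣ a * b := ha.mul_right b
  have hA := multipliable_one_add_of_X_pow_dvd fun i ↦ X_pow_dvd_mul_pow hab a i
  have hB := multipliable_one_add_of_X_pow_dvd fun i ↦ X_pow_dvd_mul_pow hab b i
  have hC : Multipliable fun i ↦ 1 - (a * b) ^ (i + 1) := by
    simpa only [neg_mul, ← pow_succ', ← sub_eq_add_neg] using
      multipliable_one_add_of_X_pow_dvd fun i ↦ X_pow_dvd_mul_pow hab (-(a * b)) i
  rw [← hA.tprod_mul hB, ← (hA.mul hB).tprod_mul hC]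
  have hprod := ((hA.mul hB).mul hC).hasProd.tendsto_prod_nat
  have hsum := (summable_thetaTerm ha hb).hasSum.comp tendsto_Icc_neg
  refine sub_eq_zero.mp (tendsto_nhds_unique (hprod.sub hsum) ?_)
  exact tendsto_zero_of_X_pow_dvd (X_pow_dvd_prod_sub_sum_thetaTerm ha hb)

end Convergence

section DistinctSeries

/-- The arithmetic progression `r, r + d, r + 2 d, …`. -/
def arithProg (r d : ℕ) : Set ℕ := Set.range fun i ↦ r + d * i

lemma mem_arithProg {r d n : ℕ} (h : r < d) : n ∈ arithProg r d ↔ n % d = r := by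
  constructor
  · rintro ⟨i, rfl⟩
    dsimp only
    rw [Nat.add_mul_mod_self_left, Nat.mod_eq_of_lt h]
  · rintro rfl
    exact ⟨n / d, Nat.mod_add_div n d⟩

lemma prod_toFinsupp_ite {A : Type*} [CommSemiring A] (ε : A) (s : Set ℕ) [DecidablePred (· ∈ s)]
    (m : Multiset ℕ) :
    (m.toFinsupp.prod fun i c ↦ if c = 1 ∧ i ∈ s then ε else 0) =
      if m.Nodup ∧ ∀ i ∈ m, i ∈ s then ε ^ m.card else 0 := by
  rw [Finsupp.prod, Multiset.toFinsupp_support]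
  split_ifs with h
  · have hone (i) (hi : i ∈ m.toFinset) : m.toFinsupp i = 1 ∧ i ∈ s :=
      ⟨Multiset.count_eq_one_of_mem h.1 (Multiset.mem_toFinset.mp hi),
        h.2 i (Multiset.mem_toFinset.mp hi)⟩
    rw [prod_congr rfl fun i hi ↦ if_pos (hone i hi), prod_const,
      Multiset.toFinset_card_of_nodup h.1]
  · obtain ⟨i, hi, hne⟩ : ∃ i ∈ m, ¬ (m.toFinsupp i = 1 ∧ i ∈ s) := by
      contrapose! h
      refine ⟨Multiset.nodup_iff_count_le_one.mpr fun i ↦ ?_, fun i hi ↦ (h i hi).2⟩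
      by_cases hi : i ∈ m
      · exact (h i hi).1.le
      · simp [hi]
    exact prod_eq_zero (Multiset.mem_toFinset.mpr hi) (if_neg hne)

open scoped PowerSeries.WithPiTopology

variable {R : Type*} [CommRing R]

lemma X_pow_dvd_smul_X_pow (ε : R) (n : ℕ) : (X : R⟦X⟧) ^ n ∣ ε • X ^ n := by
  rw [smul_eq_C_mul]
  exact dvd_mul_left _ _

variable [TopologicalSpace R]

lemma continuous_expand {j : ℕ} (hj : j ≠ 0) : Continuous (expand j hj : R⟦X⟧ → R⟦X⟧) := by
  refine continuous_iff_continuousAt.mpr fun f ↦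
    (WithPiTopology.tendsto_iff_coeff_tendsto R _ _ _).mpr fun n ↦ ?_
  simp only [coeff_expand]
  split_ifs
  · exact (WithPiTopology.continuous_coeff R _).tendsto f
  · exact tendsto_const_nhds

/-- The product `∏ (1 + ε qⁿ)` over `n ∈ s`, which generates the partitions into distinct parts
from `s`, each part carrying the weight `ε`. -/
noncomputable def distinctSeries (ε : R) (s : Set ℕ) : R⟦X⟧ := ∏' n : s, (1 + ε • X ^ (n : ℕ))

lemma multipliable_distinctSeries (ε : R) (s : Set ℕ) :
    Multipliable fun n : s ↦ (1 : R⟦X⟧) + ε • X ^ (n : ℕ) := by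
  have hindicator : s.mulIndicator (fun n ↦ (1 : R⟦X⟧) + ε • X ^ n) =
      fun n ↦ 1 + s.indicator (fun n ↦ ε • X ^ n) n := by
    ext1 n
    by_cases hn : n ∈ s <;> simp [hn]
  refine (multipliable_subtype_iff_mulIndicator
    (f := fun n ↦ (1 : R⟦X⟧) + ε • X ^ n)).mpr ?_
  rw [hindicator]
  refine multipliable_one_add_of_X_pow_dvd fun n ↦ ?_
  by_cases hn : n ∈ s <;> simp [hn, X_pow_dvd_smul_X_pow]

lemma distinctSeries_arithProg (ε : R) (r : ℕ) {d : ℕ} (hd : d ≠ 0) :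
    distinctSeries ε (arithProg r d) = ∏' i, (1 + ε • X ^ (r + d * i)) :=
  tprod_range (fun n ↦ (1 : R⟦X⟧) + ε • X ^ n)
    ((add_right_injective r).comp (mul_right_injective₀ hd))

variable [T2Space R]

lemma expand_distinctSeries {j : ℕ} (hj : j ≠ 0) (ε : R) (s : Set ℕ) :
    expand j hj (distinctSeries ε s) = distinctSeries ε ((j * ·) '' s) := by
  rw [distinctSeries, distinctSeries,
    tprod_image (fun n ↦ 1 + ε • X ^ n) (mul_right_injective₀ hj).injOn,
    (multipliable_distinctSeries ε s).map_tprod _ (continuous_expand hj)]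
  simp [pow_mul]

lemma distinctSeries_arithProg_self (ε : R) {d : ℕ} (hd : d ≠ 0) :
    distinctSeries ε (arithProg d d) = expand d hd (distinctSeries ε {n | 0 < n}) := by
  have himage : arithProg d d = (d * ·) '' {n | 0 < n} := by
    ext n
    constructor
    · rintro ⟨i, rfl⟩
      exact ⟨i + 1, i.succ_pos, by dsimp only; ring⟩
    · rintro ⟨_ | i, hi, rfl⟩
      · exact absurd hi (lt_irrefl 0)
      · exact ⟨i, by dsimp only; ring⟩
  rw [expand_distinctSeries, himage]

lemma distinctSeries_eq_genFun (ε : R) {s : Set ℕ} [DecidablePred (· ∈ s)] (hs : 0 ∉ s) :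
    distinctSeries ε s = Nat.Partition.genFun fun i c ↦ if c = 1 ∧ i ∈ s then ε else 0 := by
  have hsupport : Function.mulSupport (s.mulIndicator fun n ↦ (1 : R⟦X⟧) + ε • X ^ n) ⊆
      Set.range Nat.succ := fun n hn ↦
    ⟨n - 1, Nat.succ_pred (ne_of_mem_of_not_mem (Set.mem_of_mulIndicator_ne_one hn) hs)⟩
  rw [distinctSeries, tprod_subtype s (fun n ↦ 1 + ε • X ^ n),
    ← Nat.succ_injective.tprod_eq hsupport, Nat.Partition.genFun_eq_tprod]
  refine tprod_congr fun i ↦ ?_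
  rw [tsum_eq_single 0 fun j hj ↦ by simp [hj]]
  by_cases hi : i + 1 ∈ s <;> simp [hi]

theorem coeff_distinctSeries (ε : R) {s : Set ℕ} [DecidablePred (· ∈ s)] (hs : 0 ∉ s) (n : ℕ) :
    coeff n (distinctSeries ε s) =
      ∑ p ∈ Nat.Partition.distincts n with ∀ i ∈ p.parts, i ∈ s, ε ^ p.parts.card := by
  rw [distinctSeries_eq_genFun ε hs, Nat.Partition.coeff_genFun, Nat.Partition.distincts,
    filter_filter, sum_filter]
  exact sum_congr rfl fun p _ ↦ prod_toFinsupp_ite ε s p.parts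

lemma isUnit_distinctSeries (ε : R) {s : Set ℕ} (hs : 0 ∉ s) : IsUnit (distinctSeries ε s) := by
  classical
  rw [isUnit_iff_constantCoeff, ← coeff_zero_eq_constantCoeff_apply, coeff_distinctSeries ε hs]
  simp [Nat.Partition.distincts]

variable [IsTopologicalRing R]

lemma distinctSeries_union (ε : R) {s t : Set ℕ} (h : Disjoint s t) :
    distinctSeries ε (s ∪ t) = distinctSeries ε s * distinctSeries ε t :=
  Multipliable.tprod_union_disjoint (f := fun n ↦ (1 : R⟦X⟧) + ε • X ^ n) h
    (multipliable_distinctSeries ε s) (multipliable_distinctSeries ε t)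

lemma distinctSeries_eq_mul_expand (ε : R) {d : ℕ} (hd : d ≠ 0) (s : Set ℕ) :
    distinctSeries ε s = distinctSeries ε {n ∈ s | ¬ d ∣ n} *
      expand d hd (distinctSeries ε {n | d * n ∈ s}) := by
  rw [expand_distinctSeries, ← distinctSeries_union]
  · congr 1
    ext n
    by_cases hn : d ∣ n
    · obtain ⟨m, rfl⟩ := hn
      simp [hd]
    · have : ∀ m, d * m ≠ n := fun m h ↦ hn ⟨m, h.symm⟩
      simp [hn, this]
  · refine Set.disjoint_left.mpr ?_
    rintro _ ⟨-, h⟩ ⟨m, -, rfl⟩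
    exact h (dvd_mul_right d m)

lemma distinctSeries_mul_distinctSeries_neg (ε : R) (s : Set ℕ) :
    distinctSeries ε s * distinctSeries (-ε) s =
      expand 2 two_ne_zero (distinctSeries (-ε ^ 2) s) := by
  rw [distinctSeries, distinctSeries, ← (multipliable_distinctSeries ε s).tprod_mul
    (multipliable_distinctSeries (-ε) s), distinctSeries,
    (multipliable_distinctSeries _ s).map_tprod _ (continuous_expand two_ne_zero)]
  refine tprod_congr fun n ↦ ?_
  rw [map_add, map_one, expand_smul, map_pow, expand_X]
  simp only [smul_eq_C_mul, map_neg, map_pow]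
  ring

theorem ramanujanTheta_smul_X_pow {ε : R} (hε : ε * ε = 1) {r s : ℕ} (hr : r ≠ 0) (hs : s ≠ 0) :
    ramanujanTheta (ε • X ^ r) (ε • X ^ s) = distinctSeries ε (arithProg r (r + s)) *
      distinctSeries ε (arithProg s (r + s)) *
        distinctSeries (-1) (arithProg (r + s) (r + s)) := by
  have hd : r + s ≠ 0 := by omega
  have hX {n : ℕ} (hn : n ≠ 0) : (X : R⟦X⟧) ∣ ε • X ^ n :=
    (dvd_pow_self X hn).trans (X_pow_dvd_smul_X_pow ε n)
  have hmul : ε • (X : R⟦X⟧) ^ r * ε • X ^ s = X ^ (r + s) := by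
    rw [smul_mul_smul_comm, hε, one_smul, pow_add]
  rw [← jacobi_triple_product (hX hr) (hX hs), hmul]
  simp only [distinctSeries_arithProg _ _ hd, smul_mul_assoc, ← pow_mul, ← pow_add, neg_smul,
    one_smul, ← sub_eq_add_neg, mul_add_one, add_comm]

end DistinctSeries

section OddPart

/-- The power series of the odd-indexed coefficients: `∑ aₙ qⁿ ↦ ∑ a₂ₙ₊₁ qⁿ`. -/
noncomputable def oddPart {R : Type*} [Semiring R] (A : R⟦X⟧) : R⟦X⟧ :=
  mk fun n ↦ coeff (2 * n + 1) A

@[simp]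
lemma coeff_oddPart {R : Type*} [Semiring R] (A : R⟦X⟧) (n : ℕ) :
    coeff n (oddPart A) = coeff (2 * n + 1) A := coeff_mk _ _

variable {R : Type*} [CommRing R]

lemma oddPart_mul_expand (A B : R⟦X⟧) :
    oddPart (A * expand 2 two_ne_zero B) = oddPart A * B := by
  ext n
  rw [coeff_oddPart, coeff_mul, coeff_mul]
  refine (sum_of_injOn (fun z : ℕ × ℕ ↦ (2 * z.1 + 1, 2 * z.2)) ?_ ?_ ?_ ?_).symm
  · rintro ⟨i, j⟩ - ⟨i', j'⟩ - h
    simp only [Prod.mk.injEq] at h ⊢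
    omega
  · rintro ⟨i, j⟩ h
    simp only [mem_coe, HasAntidiagonal.mem_antidiagonal] at h ⊢
    omega
  · rintro ⟨i, j⟩ h hrange
    rw [HasAntidiagonal.mem_antidiagonal] at h
    rw [coeff_expand_of_not_dvd, mul_zero]
    rintro ⟨w, rfl⟩
    refine hrange ⟨(n - w, w), ?_, ?_⟩
    · simp only [mem_coe, HasAntidiagonal.mem_antidiagonal]
      omega
    · simp only [Prod.mk.injEq, and_true]
      omega
  · rintro ⟨i, j⟩ -
    rw [coeff_oddPart, coeff_expand_mul]

open scoped PowerSeries.WithPiTopology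

variable [TopologicalSpace R] [T2Space R]

lemma oddPart_eq_self_of_hasSum_X_pow {ι : Type*} {e : ι → ℕ} {A : R⟦X⟧}
    (hA : HasSum (fun i ↦ X ^ e i) A) {σ : ι → ι} (hσ : Function.Injective σ)
    (he : ∀ i, e (σ i) = 2 * e i + 1) (hrange : ∀ i, Odd (e i) → i ∈ Set.range σ) :
    oddPart A = A := by
  rw [WithPiTopology.hasSum_iff_hasSum_coeff] at hA
  ext n
  have hodd := hA (2 * n + 1)
  rw [← hσ.hasSum_iff] at hodd
  · rw [coeff_oddPart]
    refine hodd.unique ?_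
    convert! hA n using 2 with i
    simp [coeff_X_pow, he]
  · intro i hi
    rw [coeff_X_pow, if_neg]
    intro h
    exact hi (hrange i (h ▸ odd_two_mul_add_one n))

lemma hasSum_thetaTerm_mul_thetaTerm [IsTopologicalRing R] {a b c d : R⟦X⟧} (ha : X ∣ a)
    (hb : X ∣ b) (hc : X ∣ c) (hd : X ∣ d) :
    HasSum (fun z : ℤ × ℤ ↦ thetaTerm a b z.1 * thetaTerm c d z.2)
      (ramanujanTheta a b * ramanujanTheta c d) := by
  refine (summable_thetaTerm ha hb).hasSum.mul (summable_thetaTerm hc hd).hasSum <|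
    summable_of_X_pow_dvd (e := fun z ↦ z.1.natAbs + z.2.natAbs) ?_ fun z ↦ ?_
  · refine tendsto_atTop.mpr fun n ↦ eventually_cofinite.mpr ?_
    refine (Set.finite_Icc ((-n, -n) : ℤ × ℤ) (n, n)).subset fun z hz ↦ ?_
    rw [Set.mem_ofPred_eq, not_le] at hz
    rw [Set.mem_Icc, Prod.le_def, Prod.le_def]
    omega
  · rw [pow_add]
    exact mul_dvd_mul (X_pow_natAbs_dvd_thetaTerm ha hb _) (X_pow_natAbs_dvd_thetaTerm hc hd _)

/-- With exponents `5 k² - 4 k + 5 l² - 2 l`, the substitution `(k, l) = (1 - u - v, u - v)`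
parametrizes the pairs of odd exponent and turns the exponent `e` into `2 e + 1`. -/
theorem oddPart_ramanujanTheta_mul_ramanujanTheta [IsTopologicalRing R] :
    oddPart (ramanujanTheta X (X ^ 9) * ramanujanTheta (X ^ 3) (X ^ 7) : R⟦X⟧) =
      ramanujanTheta X (X ^ 9) * ramanujanTheta (X ^ 3) (X ^ 7) := by
  let e (z : ℤ × ℤ) : ℕ := triangular z.1 + 9 * triangular (-z.1) +
    (3 * triangular z.2 + 7 * triangular (-z.2))
  have he (z : ℤ × ℤ) : (e z : ℤ) = 5 * z.1 ^ 2 - 4 * z.1 + 5 * z.2 ^ 2 - 2 * z.2 := by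
    push_cast [e]
    linarith [two_mul_natCast_triangular z.1, two_mul_natCast_triangular (-z.1),
      two_mul_natCast_triangular z.2, two_mul_natCast_triangular (-z.2)]
  have hsum := hasSum_thetaTerm_mul_thetaTerm (R := R) (dvd_refl X)
    (dvd_pow_self X (by decide : 9 ≠ 0)) (dvd_pow_self X (by decide : 3 ≠ 0))
    (dvd_pow_self X (by decide : 7 ≠ 0))
  simp only [thetaTerm, ← pow_mul, ← pow_add] at hsum
  refine oddPart_eq_self_of_hasSum_X_pow (e := e) hsum
    (σ := fun z ↦ (1 - z.1 - z.2, z.1 - z.2)) ?_ (fun z ↦ ?_) fun z hz ↦ ?_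
  · rintro ⟨u, v⟩ ⟨u', v'⟩ h
    simp only [Prod.mk.injEq] at h ⊢
    omega
  · zify
    rw [he, he]
    ring
  · obtain ⟨m, hm⟩ := (Int.odd_coe_nat _).mpr hz
    obtain ⟨x, hx⟩ := Int.even_mul_pred_self z.1
    obtain ⟨y, hy⟩ := Int.even_mul_pred_self z.2
    obtain ⟨w, hw⟩ : Odd (z.1 + z.2) := ⟨m - 5 * x - 5 * y - z.2, by linarith [he z]⟩
    exact ⟨(z.2 - w, -w), by ext <;> dsimp only <;> omega⟩

end OddPart

section Squares

open scoped PowerSeries.WithPiTopology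

lemma thetaTerm_self {A : Type*} [CommSemiring A] (a : A) (k : ℤ) :
    thetaTerm a a k = a ^ (k.natAbs ^ 2) := by
  rw [thetaTerm, ← pow_add, triangular_add_triangular_neg]

variable {R : Type*} [CommRing R] [UniformSpace R] [IsUniformAddGroup R] [CompleteSpace R]
  [T2Space R]

lemma ramanujanTheta_self {a : R⟦X⟧} (ha : X ∣ a) :
    ramanujanTheta a a = 1 + 2 * ∑' n : ℕ+, a ^ ((n : ℕ) ^ 2) := by
  have heven : (thetaTerm a a).Even := fun k ↦ by
    rw [thetaTerm_self, thetaTerm_self, Int.natAbs_neg]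
  rw [ramanujanTheta, tsum_int_eq_zero_add_two_mul_tsum_pnat heven (summable_thetaTerm ha ha)]
  simp [thetaTerm_self]

end Squares

section GeneratingFunctions

open scoped PowerSeries.WithPiTopology

/-- The generating function `∏ (1 + qⁿ)` of partitions into distinct parts. -/
noncomputable def distinctPartsSeries : ℤ⟦X⟧ := distinctSeries 1 {n | 0 < n}

/-- Euler's product `∏ (1 - qⁿ)`. -/
noncomputable def eulerSeries : ℤ⟦X⟧ := distinctSeries (-1) {n | 0 < n}

/-- The generating function of `b5'`, the product of `1 + qⁿ` over all `n` prime to `5`. -/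
noncomputable def fiveRegularSeries : ℤ⟦X⟧ := distinctSeries 1 {n | ¬ 5 ∣ n}

/-- The part of the product `fiveRegularSeries` that comes from odd `n`. -/
noncomputable def oddFiveRegularSeries : ℤ⟦X⟧ := distinctSeries 1 {n | ¬ 5 ∣ n ∧ ¬ 2 ∣ n}

lemma isUnit_eulerSeries : IsUnit eulerSeries := isUnit_distinctSeries _ (by simp)

lemma isUnit_fiveRegularSeries : IsUnit fiveRegularSeries := isUnit_distinctSeries _ (by simp)

lemma coeff_fiveRegularSeries (n : ℕ) : coeff n fiveRegularSeries = b5' n := by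
  rw [fiveRegularSeries, coeff_distinctSeries 1 (by simp), b5']
  simp

lemma fiveRegularSeries_mul_expand :
    fiveRegularSeries * expand 5 (by decide) distinctPartsSeries = distinctPartsSeries := by
  have h := distinctSeries_eq_mul_expand (1 : ℤ) (by decide : 5 ≠ 0) {n | 0 < n}
  have hcoprime : {n ∈ {n | 0 < n} | ¬ 5 ∣ n} = {n | ¬ 5 ∣ n} := by
    ext n; simp only [Set.mem_ofPred_eq]; omega
  have hmultiple : {n | 5 * n ∈ {n | 0 < n}} = {n | 0 < n} := by
    ext n; simp only [Set.mem_ofPred_eq]; omega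
  rw [hcoprime, hmultiple] at h
  exact h.symm

lemma oddFiveRegularSeries_mul_expand :
    oddFiveRegularSeries * expand 2 two_ne_zero fiveRegularSeries = fiveRegularSeries := by
  have h := distinctSeries_eq_mul_expand (1 : ℤ) two_ne_zero {n | ¬ 5 ∣ n}
  have heven : {n | 2 * n ∈ {n | ¬ 5 ∣ n}} = {n | ¬ 5 ∣ n} := by
    ext n; simp only [Set.mem_ofPred_eq]; omega
  rw [heven] at h
  exact h.symm

lemma distinctPartsSeries_mul_eulerSeries :
    distinctPartsSeries * eulerSeries = expand 2 two_ne_zero eulerSeries := by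
  rw [distinctPartsSeries, eulerSeries, distinctSeries_mul_distinctSeries_neg, one_pow]

lemma ramanujanTheta_neg_X_mul_expand :
    ramanujanTheta (-X) (-X) * expand 2 two_ne_zero eulerSeries = eulerSeries ^ 2 := by
  have htheta := ramanujanTheta_smul_X_pow (ε := (-1 : ℤ)) (by norm_num) one_ne_zero one_ne_zero
  have heuler := distinctSeries_eq_mul_expand (-1 : ℤ) two_ne_zero {n | 0 < n}
  have hodd : {n ∈ {n | 0 < n} | ¬ 2 ∣ n} = arithProg 1 2 := by
    ext n; simp only [Set.mem_ofPred_eq, mem_arithProg one_lt_two]; omega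
  have heven : {n | 2 * n ∈ {n | 0 < n}} = {n | 0 < n} := by
    ext n; simp only [Set.mem_ofPred_eq]; omega
  rw [hodd, heven, ← eulerSeries] at heuler
  rw [one_add_one_eq_two, distinctSeries_arithProg_self _ two_ne_zero, ← eulerSeries, pow_one,
    smul_eq_C_mul, map_neg, map_one, neg_one_mul] at htheta
  rw [htheta]
  nth_rw 3 [heuler]
  ring

lemma ramanujanTheta_mul_ramanujanTheta_eq :
    ramanujanTheta X (X ^ 9) * ramanujanTheta (X ^ 3) (X ^ 7) =
      oddFiveRegularSeries * expand 10 (by decide) eulerSeries ^ 2 := by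
  have h₁₉ := ramanujanTheta_smul_X_pow (ε := (1 : ℤ)) (r := 1) (s := 9)
    (by norm_num) (by decide) (by decide)
  have h₃₇ := ramanujanTheta_smul_X_pow (ε := (1 : ℤ)) (r := 3) (s := 7)
    (by norm_num) (by decide) (by decide)
  have hunion : {n | ¬ 5 ∣ n ∧ ¬ 2 ∣ n} =
      (arithProg 1 10 ∪ arithProg 9 10) ∪ (arithProg 3 10 ∪ arithProg 7 10) := by
    ext n
    simp only [Set.mem_ofPred_eq, Set.mem_union, mem_arithProg, Nat.reduceLT]
    omega
  rw [oddFiveRegularSeries, hunion, distinctSeries_union, distinctSeries_union,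
    distinctSeries_union]
  · simp only [smul_eq_C_mul, map_one, one_mul, pow_one, Nat.reduceAdd] at h₁₉ h₃₇
    rw [h₁₉, h₃₇, distinctSeries_arithProg_self _ (by decide), ← eulerSeries]
    ring
  all_goals
    refine Set.disjoint_left.mpr fun n ↦ ?_
    simp only [Set.mem_union, mem_arithProg, Nat.reduceLT]
    omega

end GeneratingFunctions

section Dissection

open scoped PowerSeries.WithPiTopology

lemma oddPart_fiveRegularSeries :
    oddPart fiveRegularSeries = oddFiveRegularSeries * fiveRegularSeries *
      expand 5 (by decide) distinctPartsSeries ^ 2 := by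
  set θ : ℤ⟦X⟧ := ramanujanTheta X (X ^ 9) * ramanujanTheta (X ^ 3) (X ^ 7) with hθ
  have hten : (10 : ℕ) ≠ 0 := by decide
  have h₂₅ : expand 10 hten eulerSeries =
      expand 2 two_ne_zero (expand 5 (by decide) eulerSeries) :=
    expand_mul 2 two_ne_zero 5 (by decide) eulerSeries
  have h₅₂ : expand 10 hten eulerSeries = expand 5 (by decide) distinctPartsSeries *
      expand 5 (by decide) eulerSeries := by
    rw [← map_mul, distinctPartsSeries_mul_eulerSeries, ← expand_mul]
  have hθ_eq : θ = oddFiveRegularSeries * expand 10 hten eulerSeries ^ 2 :=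
    ramanujanTheta_mul_ramanujanTheta_eq
  have hsplit : fiveRegularSeries * expand 2 two_ne_zero (expand 5 (by decide) eulerSeries ^ 2) =
      θ * expand 2 two_ne_zero fiveRegularSeries := by
    rw [hθ_eq, map_pow, ← h₂₅, mul_right_comm, oddFiveRegularSeries_mul_expand]
  have hodd := congrArg oddPart hsplit
  rw [oddPart_mul_expand, oddPart_mul_expand, hθ, oddPart_ramanujanTheta_mul_ramanujanTheta,
    ← hθ, hθ_eq, h₅₂] at hodd
  refine ((isUnit_eulerSeries.map (expand 5 (by decide))).pow 2).mul_right_cancel (hodd.trans ?_)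
  ring

lemma oddPart_fiveRegularSeries_mul_expand :
    oddPart fiveRegularSeries * expand 2 two_ne_zero fiveRegularSeries =
      distinctPartsSeries ^ 2 := by
  rw [oddPart_fiveRegularSeries]
  linear_combination (fiveRegularSeries * expand 5 (by decide) distinctPartsSeries ^ 2) *
      oddFiveRegularSeries_mul_expand +
    (fiveRegularSeries * expand 5 (by decide) distinctPartsSeries + distinctPartsSeries) *
      fiveRegularSeries_mul_expand

lemma ramanujanTheta_neg_X_mul_distinctPartsSeries :
    ramanujanTheta (-X) (-X) * distinctPartsSeries = eulerSeries := by
  refine isUnit_eulerSeries.mul_right_cancel ?_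
  rw [mul_assoc, distinctPartsSeries_mul_eulerSeries, ramanujanTheta_neg_X_mul_expand, sq]

theorem oddPart_fiveRegularSeries_mul_ramanujanTheta :
    oddPart fiveRegularSeries * ramanujanTheta (-X) (-X) =
      expand 2 two_ne_zero (ramanujanTheta (-X) (-X)) *
        expand 10 (by decide) distinctPartsSeries := by
  have hdissection := oddPart_fiveRegularSeries_mul_expand
  have hθ := ramanujanTheta_neg_X_mul_distinctPartsSeries
  have hexpand : expand 2 two_ne_zero fiveRegularSeries *
      expand 10 (by decide) distinctPartsSeries = expand 2 two_ne_zero distinctPartsSeries := by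
    have h := congrArg (expand 2 two_ne_zero) fiveRegularSeries_mul_expand
    rwa [map_mul, ← expand_mul] at h
  refine (isUnit_fiveRegularSeries.map (expand 2 two_ne_zero)).mul_right_cancel ?_
  calc oddPart fiveRegularSeries * ramanujanTheta (-X) (-X) *
        expand 2 two_ne_zero fiveRegularSeries
    _ = distinctPartsSeries * (ramanujanTheta (-X) (-X) * distinctPartsSeries) := by
        rw [mul_right_comm, hdissection]
        ring
    _ = expand 2 two_ne_zero (ramanujanTheta (-X) (-X) * distinctPartsSeries) := by
        rw [hθ, distinctPartsSeries_mul_eulerSeries]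
    _ = _ := by
        rw [map_mul, ← hexpand]
        ring

/-- The sum `∑ (-q) ^ n²` over `n ≥ 1`. -/
noncomputable def squareSeries : ℤ⟦X⟧ := ∑' n : ℕ+, (-X) ^ ((n : ℕ) ^ 2)

lemma ramanujanTheta_neg_X : ramanujanTheta (-X) (-X) = 1 + 2 * squareSeries :=
  ramanujanTheta_self (dvd_neg.mpr dvd_rfl)

lemma isSquare_of_coeff_squareSeries_ne_zero {n : ℕ} (hn : coeff n squareSeries ≠ 0) :
    IsSquare n := by
  have hX : (X : ℤ⟦X⟧) ∣ -X := dvd_neg.mpr dvd_rfl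
  have hsummable : Summable fun k : ℕ+ ↦ (-X : ℤ⟦X⟧) ^ ((k : ℕ) ^ 2) := by
    have hinj : Function.Injective fun k : ℕ+ ↦ (k : ℤ) := fun k l h ↦ by simpa using h
    simpa [Function.comp_def, thetaTerm_self] using (summable_thetaTerm hX hX).comp_injective hinj
  have hsum := (WithPiTopology.hasSum_iff_hasSum_coeff ℤ).mp hsummable.hasSum n
  contrapose! hn
  refine hsum.unique ?_
  convert! hasSum_zero with k
  have hk : n ≠ (k : ℕ) ^ 2 := fun h ↦ hn (h ▸ IsSquare.sq _)
  rw [neg_pow, ← map_one (C (R := ℤ)), ← map_neg, ← map_pow, coeff_C_mul, coeff_X_pow, if_neg hk,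
    mul_zero]

lemma eulerSeries_eq_pentagonalSeries : eulerSeries = pentagonalSeries ℤ := by
  have h := distinctSeries_arithProg_self (-1 : ℤ) one_ne_zero
  rw [distinctSeries_arithProg _ _ one_ne_zero, expand_one_apply] at h
  rw [eulerSeries, ← h, ← WithPiTopology.tprod_one_sub_X_pow]
  simp [smul_eq_C_mul, sub_eq_add_neg, add_comm]

lemma coeff_eulerSeries_of_mod_five_eq_three {n : ℕ} (hn : n % 5 = 3) :
    coeff n eulerSeries = 0 := by
  rw [eulerSeries_eq_pentagonalSeries, coeff_pentagonalSeries_eq_zero]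
  rintro ⟨k, rfl⟩
  have hmod : ∀ x : ZMod 5, 2 * 3 ≠ x * (3 * x - 1) := by decide
  have hk := congrArg (Int.cast (R := ZMod 5)) (two_mul_natCast_pentagonal k)
  push_cast at hk
  rw [(ZMod.natCast_eq_natCast_iff' (pentagonal k) 3 5).mpr hn] at hk
  exact hmod k hk

lemma coeff_distinctPartsSeries_modEq_coeff_eulerSeries (n : ℕ) :
    coeff n distinctPartsSeries ≡ coeff n eulerSeries [ZMOD 2] := by
  rw [distinctPartsSeries, eulerSeries, coeff_distinctSeries _ (by simp),
    coeff_distinctSeries _ (by simp)]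
  exact Int.ModEq.sum fun p _ ↦ (show (1 : ℤ) ≡ -1 [ZMOD 2] by decide).pow _

lemma even_coeff_squareSeries_mul_expand (n : ℕ) :
    Even (coeff (50 * n + 5) (squareSeries * expand 10 (by decide) distinctPartsSeries)) := by
  rw [coeff_mul]
  refine even_sum _ fun ⟨i, j⟩ hij ↦ ?_
  rw [HasAntidiagonal.mem_antidiagonal] at hij
  dsimp only at hij ⊢
  by_cases hi : coeff i squareSeries = 0
  · simp [hi]
  rw [coeff_expand]
  split_ifs with hj
  · obtain ⟨w, rfl⟩ := hj
    obtain ⟨x, rfl⟩ := isSquare_of_coeff_squareSeries_ne_zero hi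
    obtain ⟨y, rfl⟩ : 5 ∣ x := or_self_iff.mp (Nat.prime_five.dvd_mul.mp (by omega))
    have hw : w % 5 = 3 := by
      rw [mul_mul_mul_comm] at hij
      omega
    rw [Nat.mul_div_cancel_left w (by decide), Int.even_mul]
    right
    rw [Int.even_iff, coeff_distinctPartsSeries_modEq_coeff_eulerSeries,
      coeff_eulerSeries_of_mod_five_eq_three hw, Int.zero_emod]
  · simp

/-- Solving `oddPart F * (1 + 2 S) = …` for `oddPart F` modulo `4`, with the inverse `1 - 2 S`. -/
lemma oddPart_fiveRegularSeries_eq_add_four_nsmul :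
    oddPart fiveRegularSeries =
      expand 2 two_ne_zero ((1 + 2 * squareSeries) * expand 5 (by decide) distinctPartsSeries) -
        2 • (squareSeries * expand 10 (by decide) distinctPartsSeries) +
          4 • (squareSeries ^ 2 * oddPart fiveRegularSeries - squareSeries *
            expand 2 two_ne_zero squareSeries * expand 10 (by decide) distinctPartsSeries) := by
  have hdissection := oddPart_fiveRegularSeries_mul_ramanujanTheta
  rw [ramanujanTheta_neg_X] at hdissection
  have hexpand := expand_mul 2 two_ne_zero 5 (by decide) distinctPartsSeries
  simp only [map_mul, map_add, map_one, map_ofNat, nsmul_eq_mul, Nat.cast_ofNat, ← hexpand]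
    at hdissection ⊢
  linear_combination (1 - 2 * squareSeries) * hdissection

lemma four_dvd_coeff_oddPart_fiveRegularSeries (n : ℕ) :
    4 ∣ coeff (50 * n + 5) (oddPart fiveRegularSeries) := by
  obtain ⟨k, hk⟩ := even_coeff_squareSeries_mul_expand n
  rw [oddPart_fiveRegularSeries_eq_add_four_nsmul, map_add, map_sub, map_nsmul, map_nsmul, hk,
    coeff_expand_of_not_dvd _ _ _ (by omega)]
  simp only [nsmul_eq_mul, Nat.cast_ofNat]
  omega

end Dissection

theorem b5'_100n11_mod4 (n : ℕ) : b5' (100 * n + 11) ≡ 0 [MOD 4] := by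
  rw [Nat.modEq_zero_iff_dvd, ← Int.natCast_dvd_natCast, ← coeff_fiveRegularSeries]
  have h := four_dvd_coeff_oddPart_fiveRegularSeries n
  rw [coeff_oddPart] at h
  convert! h using 3
  ring
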